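/- arXiv:1811.06413 — 2 statements merged into one kernel-verified Lean document; each statement's English description precedes it below -/
import Mathlib

section
/- Let G₀ be a subset of a finite abelian group G such that ℬ(G₀) has at least one atom. Then c(ℬ(G₀)) ≤ (2·d(G₀) + 2) / min{|α| : α ∈ 𝒜(ℬ(G₀))}. -/
/-!
The proof is a combinatorial version of Derksen's degree bound for syzygies of invariants.
Write `d` for the little Davenport constant, so that every sequence of length at least `d + 1`
over `G₀` is divisible by an atom, and every atom has length at most `d + 1`.

*Monomial syzygies* (`path_le`): call two atoms close when their least common multiple has length at
most `d + 2`. Any two atoms `a`, `a'` dividing a sequence `b` are linked by a path of close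
atoms dividing `b`. If `|b| ≤ d + 2` this is clear. Otherwise `a` divides `b - x` and `a'` divides
`b - y` for some terms `x`, `y`; either `x = y`, or `b - x - y` still has length at least `d + 1`
and is divisible by an atom, which links `a` within `b - x` and `a'` within `b - y`.

*Factorizations* (`connected`): by induction on `|b|`, any two factorizations of a block `b` are
linked by steps of distance at most `(2 * d + 2) / m`, where `m` is the minimal length of an atom.
If `|b| ≤ 2 * d + 2`, a single step suffices. Otherwise two factorizations sharing an atom are
linked by the induction hypothesis. If `a`, `a'` divide `b` and are close, then the complement in
`b` of their least common multiple has length at least `d + 1`, hence is divisible by an atom `e`;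
a factorization through `a + e` and one through `a' + e` share `e`. The path of close atoms
then links arbitrary factorizations.
-/

/-! ## Common definitions: atoms, factorizations, catenary degrees -/

/-- An atom of an additive commutative monoid: a nonzero element that cannot be
written as a sum of two nonzero elements. -/
def IsAtm {S : Type*} [AddCommMonoid S] (a : S) : Prop :=
  a ≠ 0 ∧ ∀ b c : S, a = b + c → b = 0 ∨ c = 0

/-- The set of atoms of an additive commutative monoid. -/
def Atoms (S : Type*) [AddCommMonoid S] : Set S := {a | IsAtm a}

/-- Exponent vectors: the free commutative monoid on the set of atoms (written additively). -/
abbrev FreeExp (S : Type*) [AddCommMonoid S] := ↥(Atoms S) →₀ ℕ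

/-- The factorization homomorphism, sending an exponent vector `α` to `a^α ∈ S`. -/
def fac {S : Type*} [AddCommMonoid S] (α : FreeExp S) : S :=
  α.sum fun a n => n • (a : S)

lemma fac_add {S : Type*} [AddCommMonoid S] (α β : FreeExp S) :
    fac (α + β) = fac α + fac β :=
  Finsupp.sum_add_index' (fun _ => zero_nsmul _) (fun a m n => add_nsmul (a : S) m n)

/-- Total degree (length) `|α|` of an exponent vector. -/
def degE {σ : Type*} (α : σ →₀ ℕ) : ℕ := α.sum fun _ n => n

/-- Pointwise minimum (the gcd in the free commutative monoid). -/
noncomputable def gcdE {σ : Type*} (α β : σ →₀ ℕ) : σ →₀ ℕ :=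
  Finsupp.zipWith min (min_self 0) α β

/-- The distance `d(α,γ)` between two exponent vectors. -/
noncomputable def dDist {σ : Type*} (α β : σ →₀ ℕ) : ℕ :=
  max (degE (α - gcdE α β)) (degE (β - gcdE α β))

/-- `α` and `γ` can be connected by a `d`-chain. -/
def ChainConn {S : Type*} [AddCommMonoid S] (d : ℕ) (α γ : FreeExp S) : Prop :=
  ∃ (k : ℕ) (c : ℕ → FreeExp S), c 0 = α ∧ c k = γ ∧
    ∀ j < k, fac (c j) = fac (c (j + 1)) ∧ dDist (c j) (c (j + 1)) ≤ d

/-- The catenary degree of `S`. -/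
noncomputable def catDeg (S : Type*) [AddCommMonoid S] : ℕ :=
  sInf {d | ∀ α γ : FreeExp S, fac α = fac γ → ChainConn d α γ}

/-- Graded degree `|α|_gr` of an exponent vector, w.r.t. a weight (grading) `w` on `S`. -/
def gdegE {S : Type*} [AddCommMonoid S] (w : S → ℕ) (α : FreeExp S) : ℕ :=
  α.sum fun a n => n * w (a : S)

/-- The graded distance `d_gr(α,γ)`. -/
noncomputable def dDistGr {S : Type*} [AddCommMonoid S] (w : S → ℕ) (α β : FreeExp S) : ℕ :=
  max (gdegE w (α - gcdE α β)) (gdegE w (β - gcdE α β))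

/-- `α` and `γ` can be connected by a chain of weight at most `d`. -/
def ChainConnGr {S : Type*} [AddCommMonoid S] (w : S → ℕ) (d : ℕ) (α γ : FreeExp S) : Prop :=
  ∃ (k : ℕ) (c : ℕ → FreeExp S), c 0 = α ∧ c k = γ ∧
    ∀ j < k, fac (c j) = fac (c (j + 1)) ∧ dDistGr w (c j) (c (j + 1)) ≤ d

/-- The graded catenary degree of `S` w.r.t. the grading `w`. -/
noncomputable def catDegGr (S : Type*) [AddCommMonoid S] (w : S → ℕ) : ℕ :=
  sInf {d | ∀ α γ : FreeExp S, fac α = fac γ → ChainConnGr w d α γ}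

/-- The defining congruence `∼_S` of `S` on the free commutative monoid on the atoms. -/
def defCon (S : Type*) [AddCommMonoid S] : AddCon (FreeExp S) where
  r α β := fac α = fac β
  iseqv := ⟨fun _ => rfl, Eq.symm, Eq.trans⟩
  add' := fun {a b c d} h1 h2 => by
    have h1' : fac a = fac b := h1
    have h2' : fac c = fac d := h2
    show fac (a + c) = fac (b + d)
    rw [fac_add, fac_add, h1', h2']

/-- A reduced affine monoid: commutative, cancellative, a finitely generated monoid embedding
into a finitely generated free abelian group, whose only unit is the identity. -/
class IsReducedAffine (S : Type*) [AddCommMonoid S] : Prop where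
  cancel : ∀ a b c : S, a + b = a + c → b = c
  affine : ∃ (k : ℕ) (f : S →+ (Fin k → ℤ)), Function.Injective f
  fg : AddMonoid.FG S
  reduced : ∀ s : S, IsAddUnit s → s = 0

/-! ## The tilde construction -/

/-- The atoms of `S̃`: pairs `a[i]` with `a` an atom of `S` and `0 ≤ i ≤ |a|`. -/
def ATil (S : Type*) [AddCommMonoid S] (w : S → ℕ) : Type _ :=
  {p : ↥(Atoms S) × ℕ // p.2 ≤ w (p.1 : S)}

/-- Constructor `a[i]` for atoms of `S̃`. -/
def atil {S : Type*} [AddCommMonoid S] (w : S → ℕ) (a : ↥(Atoms S)) (i : ℕ)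
    (h : i ≤ w (a : S)) : ATil S w := ⟨(a, i), h⟩

/-- The map `κ : ℕ₀^{𝒜(S̃)} → ℕ₀^{𝒜(S)}`, `κ(λ)(a) = Σ_i λ(a[i])`. -/
noncomputable def kap (S : Type*) [AddCommMonoid S] (w : S → ℕ) :
    (ATil S w →₀ ℕ) → FreeExp S :=
  Finsupp.mapDomain fun p => p.val.1

/-- The map `δ : ℕ₀^{𝒜(S̃)} → ℕ₀`, `δ(λ) = Σ i·λ(a[i])`. -/
def delt {S : Type*} [AddCommMonoid S] (w : S → ℕ) (l : ATil S w →₀ ℕ) : ℕ :=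
  l.sum fun p n => n * p.val.2

lemma kap_add {S : Type*} [AddCommMonoid S] (w : S → ℕ) (l m : ATil S w →₀ ℕ) :
    kap S w (l + m) = kap S w l + kap S w m := Finsupp.mapDomain_add

lemma delt_add {S : Type*} [AddCommMonoid S] (w : S → ℕ) (l m : ATil S w →₀ ℕ) :
    delt w (l + m) = delt w l + delt w m :=
  Finsupp.sum_add_index' (fun _ => zero_mul _) (fun _ m n => add_mul m n _)

/-- The defining congruence of `S̃` (under the identification `𝒜(S̃) = {a[i]}`,
`x^λ ∼_{S̃} x^μ` iff `a^{κλ} = a^{κμ}` in `S` and `δλ = δμ`). -/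
def defConTil (S : Type*) [AddCommMonoid S] (w : S → ℕ) : AddCon (ATil S w →₀ ℕ) where
  r l m := fac (kap S w l) = fac (kap S w m) ∧ delt w l = delt w m
  iseqv := ⟨fun _ => ⟨rfl, rfl⟩, fun h => ⟨h.1.symm, h.2.symm⟩,
    fun h h' => ⟨h.1.trans h'.1, h.2.trans h'.2⟩⟩
  add' := fun h1 h2 =>
    ⟨by rw [kap_add, kap_add, fac_add, fac_add, h1.1, h2.1],
     by rw [delt_add, delt_add, h1.2, h2.2]⟩

/-- The quadratic relations `(x_{a[k]} x_{b[l]}, x_{a[k+1]} x_{b[l-1]})`,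
for `a, b ∈ 𝒜(S)`, `0 ≤ k ≤ |a| - 1`, `1 ≤ l ≤ |b|`. -/
def quadRel (S : Type*) [AddCommMonoid S] (w : S → ℕ) :
    (ATil S w →₀ ℕ) → (ATil S w →₀ ℕ) → Prop := fun x y =>
  ∃ (a b : ↥(Atoms S)) (k l : ℕ) (hk : k + 1 ≤ w (a : S)) (_ : 1 ≤ l) (hl : l ≤ w (b : S)),
    x = Finsupp.single (atil w a k (Nat.le_of_succ_le hk)) 1 +
        Finsupp.single (atil w b l hl) 1 ∧
    y = Finsupp.single (atil w a (k + 1) hk) 1 +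
        Finsupp.single (atil w b (l - 1) (le_trans (Nat.sub_le l 1) hl)) 1

/-! ## Block monoids -/

/-- The block monoid `ℬ(g)` of a tuple `g = (g₁,…,g_m)` of elements of a commutative
monoid `G`. -/
def BlockT {G : Type*} [CommMonoid G] {m : ℕ} (g : Fin m → G) :
    AddSubmonoid (Fin m → ℕ) where
  carrier := {α | ∏ i, g i ^ α i = 1}
  zero_mem' := by simp
  add_mem' := by
    intro a b ha hb
    simp only [Set.mem_setOf_eq] at *
    show ∏ i, g i ^ (a i + b i) = 1
    simp [pow_add, Finset.prod_mul_distrib, ha, hb]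

/-- The block monoid `ℬ(G₀)` of a subset `G₀` of a commutative monoid `G`. -/
noncomputable def BlockS {G : Type*} [CommMonoid G] (G₀ : Set G) : AddSubmonoid (G₀ →₀ ℕ) where
  carrier := {α | (α.prod fun x n => (x : G) ^ n) = 1}
  zero_mem' := by simp
  add_mem' := by
    intro a b ha hb
    simp only [Set.mem_setOf_eq] at *
    rw [Finsupp.prod_add_index' (fun x => pow_zero _) (fun x m n => pow_add _ m n), ha, hb,
      one_mul]

/-- The monoid `S̃` for `S = ℬ(g)` graded by the last coordinate. -/
def TildeB {G : Type*} [CommMonoid G] {m : ℕ} (g : Fin (m + 1) → G) :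
    AddSubmonoid ((Fin (m + 1) → ℕ) × ℕ) where
  carrier := {p | p.1 ∈ BlockT g ∧ p.2 ≤ p.1 (Fin.last m)}
  zero_mem' := ⟨(BlockT g).zero_mem, le_rfl⟩
  add_mem' := by
    intro a b ha hb
    exact ⟨(BlockT g).add_mem ha.1 hb.1, add_le_add ha.2 hb.2⟩

/-- The Davenport constant `D(G₀)`: the maximal length of an atom of `ℬ(G₀)`. -/
noncomputable def DavenportC {G : Type*} [CommMonoid G] (G₀ : Set G) : ℕ :=
  sSup {k | ∃ γ : ↥(BlockS G₀), IsAtm γ ∧ degE (γ : G₀ →₀ ℕ) = k}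

/-- The little Davenport constant `d(G₀)`: the maximal length of a sequence over `G₀`
containing no product-one subsequence. -/
noncomputable def littleDav {G : Type*} [CommMonoid G] (G₀ : Set G) : ℕ :=
  sSup {k | ∃ α : G₀ →₀ ℕ, degE α = k ∧
    ∀ γ : ↥(BlockS G₀), IsAtm γ → ∃ x : G₀, α x < (γ : G₀ →₀ ℕ) x}

/-! ## Gröbner systems -/

/-- An admissible total order (given as a strict order relation) on a free commutative
monoid, written additively. -/
def IsAdmissible {F : Type*} [AddCommMonoid F] (lt : F → F → Prop) : Prop :=
  (∀ x y, lt x y ∨ x = y ∨ lt y x) ∧ (∀ x y z, lt x y → lt y z → lt x z) ∧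
  (∀ x, ¬ lt x x) ∧ (∀ x y z, lt x y → lt (x + z) (y + z)) ∧ (∀ x, x ≠ 0 → lt 0 x)

/-- `Λ` is a Gröbner system of the congruence `c` with respect to the order `lt`. -/
def IsGroebnerSystem {F : Type*} [AddCommMonoid F] (lt : F → F → Prop) (c : AddCon F)
    (Λ : Set (F × F)) : Prop :=
  Λ.Finite ∧ (∀ p ∈ Λ, c p.1 p.2 ∧ lt p.2 p.1) ∧
  (∀ z : F, (∀ p ∈ Λ, ¬ ∃ u, z = p.1 + u) → ∀ y, c z y → z = y ∨ lt z y)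

/-- The ordering on positions `a[i]` induced by an enumeration of the atoms. -/
def posLt {S : Type*} [AddCommMonoid S] {w : S → ℕ} {n : ℕ} (e : Fin n ≃ ↥(Atoms S))
    (q p : ATil S w) : Prop :=
  e.symm q.val.1 < e.symm p.val.1 ∨ (e.symm q.val.1 = e.symm p.val.1 ∧ q.val.2 < p.val.2)

/-- The admissible order on the free commutative monoid on `𝒜(S̃)` extending the order
`lt` on the free commutative monoid on `𝒜(S)`. -/
def ltTil {S : Type*} [AddCommMonoid S] (w : S → ℕ) (lt : FreeExp S → FreeExp S → Prop)
    {n : ℕ} (e : Fin n ≃ ↥(Atoms S)) (mu lam : ATil S w →₀ ℕ) : Prop :=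
  lt (kap S w mu) (kap S w lam) ∨
  (kap S w mu = kap S w lam ∧
    ∃ p : ATil S w, lam p < mu p ∧ ∀ q : ATil S w, posLt e q p → mu q = lam q)

/-- The set `Γ₂` of pairs `(x_{a[i]} x_{b[j]}, x_{a[i-1]} x_{b[j+1]})` with `x_a ≺ x_b`,
`0 < i ≤ |a|`, `0 ≤ j < |b|`. -/
def Gam2 (S : Type*) [AddCommMonoid S] (w : S → ℕ) (lt : FreeExp S → FreeExp S → Prop) :
    Set ((ATil S w →₀ ℕ) × (ATil S w →₀ ℕ)) :=
  {pr | ∃ (a b : ↥(Atoms S)) (i j : ℕ) (_ : 0 < i) (hi : i ≤ w (a : S)) (hj : j + 1 ≤ w (b : S)),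
    lt (Finsupp.single a 1) (Finsupp.single b 1) ∧
    pr = (Finsupp.single (atil w a i hi) 1 +
            Finsupp.single (atil w b j (Nat.le_of_succ_le hj)) 1,
          Finsupp.single (atil w a (i - 1) (le_trans (Nat.sub_le i 1) hi)) 1 +
            Finsupp.single (atil w b (j + 1) hj) 1)}

/-- The set `Γ₃` of pairs `(x_{a[i]} x_{a[j]}, x_{a[i-1]} x_{a[j+1]})` with `0 < i ≤ j < |a|`. -/
def Gam3 (S : Type*) [AddCommMonoid S] (w : S → ℕ) :
    Set ((ATil S w →₀ ℕ) × (ATil S w →₀ ℕ)) :=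
  {pr | ∃ (a : ↥(Atoms S)) (i j : ℕ) (_ : 0 < i) (hij : i ≤ j) (hj : j + 1 ≤ w (a : S)),
    pr = (Finsupp.single (atil w a i (le_trans hij (Nat.le_of_succ_le hj))) 1 +
            Finsupp.single (atil w a j (Nat.le_of_succ_le hj)) 1,
          Finsupp.single (atil w a (i - 1)
              (le_trans (Nat.sub_le i 1) (le_trans hij (Nat.le_of_succ_le hj)))) 1 +
            Finsupp.single (atil w a (j + 1) hj) 1)}

/-! ## The presentation homomorphism for semigroup rings -/

/-- The homomorphism `π_R : R[x_a : a ∈ 𝒜(S)] → R[S]`, `x_a ↦ a`. -/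
noncomputable def piR (R : Type*) (S : Type*) [CommRing R] [AddCommMonoid S] :
    MvPolynomial ↥(Atoms S) R →ₐ[R] AddMonoidAlgebra R S :=
  MvPolynomial.aeval fun a => AddMonoidAlgebra.single (a : S) 1

/-! ### Factorization chains and lengths -/

namespace DavenportBound

open Relation

/-- One step of a `d`-chain of factorizations. -/
def Step {S : Type*} [AddCommMonoid S] (d : ℕ) (α γ : FreeExp S) : Prop :=
  fac α = fac γ ∧ dDist α γ ≤ d

lemma chainConn_of_reflTransGen {S : Type*} [AddCommMonoid S] {d : ℕ} {α γ : FreeExp S}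
    (h : ReflTransGen (Step d) α γ) : ChainConn d α γ := by
  induction h using ReflTransGen.head_induction_on with
  | refl => exact ⟨0, fun _ => γ, rfl, rfl, by simp⟩
  | @head a b hab _ ih =>
    obtain ⟨k, c, h0, hk, hc⟩ := ih
    refine ⟨k + 1, fun j => Nat.casesOn j a c, rfl, hk, ?_⟩
    intro j hj
    cases j with
    | zero =>
      change fac a = fac (c 0) ∧ dDist a (c 0) ≤ d
      rw [h0]
      exact hab
    | succ j => exact hc j (by omega)

lemma dDist_add_left {σ : Type*} (δ α β : σ →₀ ℕ) :
    dDist (δ + α) (δ + β) = dDist α β := by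
  have h1 : δ + α - gcdE (δ + α) (δ + β) = α - gcdE α β := by
    ext x; simp only [gcdE, Finsupp.tsub_apply, Finsupp.zipWith_apply, Finsupp.add_apply]; omega
  have h2 : δ + β - gcdE (δ + α) (δ + β) = β - gcdE α β := by
    ext x; simp only [gcdE, Finsupp.tsub_apply, Finsupp.zipWith_apply, Finsupp.add_apply]; omega
  rw [dDist, h1, h2, dDist]

lemma Step.add_left {S : Type*} [AddCommMonoid S] {d : ℕ} (δ : FreeExp S) {α γ : FreeExp S}
    (h : ReflTransGen (Step d) α γ) : ReflTransGen (Step d) (δ + α) (δ + γ) :=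
by
  induction h with
  | refl => exact .refl
  | tail _ hab ih =>
    exact ih.tail ⟨by rw [fac_add, fac_add, hab.1], by rw [dDist_add_left]; exact hab.2⟩

lemma degE_add {σ : Type*} (α β : σ →₀ ℕ) : degE (α + β) = degE α + degE β :=
  Finsupp.sum_add_index' (fun _ => rfl) (fun _ _ _ => rfl)

lemma degE_mono {σ : Type*} {α β : σ →₀ ℕ} (h : α ≤ β) : degE α ≤ degE β := by
  obtain ⟨c, rfl⟩ := exists_add_of_le h
  rw [degE_add]; omega

lemma degE_single {σ : Type*} (x : σ) (n : ℕ) : degE (Finsupp.single x n) = n := by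
  simp [degE]

lemma degE_eq_zero {σ : Type*} {α : σ →₀ ℕ} (h : degE α = 0) : α = 0 := by
  ext x
  have : Finsupp.single x (α x) ≤ α := by simp
  have := degE_mono this
  rw [degE_single] at this
  simpa using (by omega : α x = 0)

lemma fac_single {S : Type*} [AddCommMonoid S] (a : Atoms S) :
    fac (Finsupp.single a 1 : FreeExp S) = a := by
  simp [fac]

lemma exists_le_and_add_single {σ : Type*} {a b : σ →₀ ℕ} (hab : a ≤ b) (hne : a ≠ b) :
    ∃ (c : σ →₀ ℕ) (x : σ), b = c + Finsupp.single x 1 ∧ a ≤ c := by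
  obtain ⟨r, rfl⟩ := exists_add_of_le hab
  obtain ⟨x, hx⟩ := Finsupp.ne_iff.mp (show r ≠ 0 by rintro rfl; simp at hne)
  have : Finsupp.single x 1 ≤ r := by simpa [Nat.one_le_iff_ne_zero] using hx
  obtain ⟨s, rfl⟩ := exists_add_of_le this
  exact ⟨a + s, x, by abel, le_self_add⟩

/-! ### Blocks, atoms and the little Davenport constant -/

section Block

variable {G : Type*} [CommGroup G] {G₀ : Set G}

lemma exists_block_add {b c : G₀ →₀ ℕ} (hc : c ∈ BlockS G₀) (hb : b ∈ BlockS G₀) (h : c ≤ b) :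
    ∃ r ∈ BlockS G₀, b = c + r := by
  obtain ⟨r, rfl⟩ := exists_add_of_le h
  refine ⟨r, ?_, rfl⟩
  change ((c + r).prod fun x n => (x : G) ^ n) = 1 at hb
  change (c.prod fun x n => (x : G) ^ n) = 1 at hc
  change (r.prod fun x n => (x : G) ^ n) = 1
  rwa [Finsupp.prod_add_index' (fun x => pow_zero _) (fun x m n => pow_add _ m n), hc,
    one_mul] at hb

lemma degE_pos_of_ne_zero {b : BlockS G₀} (h : b ≠ 0) : 0 < degE (b : G₀ →₀ ℕ) := by
  by_contra h0
  exact h (Subtype.ext (degE_eq_zero (by omega)))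

lemma exists_fac (b : BlockS G₀) : ∃ z : FreeExp (BlockS G₀), fac z = b := by
  induction hn : degE (b : G₀ →₀ ℕ) using Nat.strong_induction_on generalizing b with
  | _ n ih =>
    by_cases h0 : b = 0
    · exact ⟨0, by simp [fac, h0]⟩
    by_cases ha : IsAtm b
    · exact ⟨Finsupp.single ⟨b, ha⟩ 1, fac_single _⟩
    · simp only [IsAtm, not_and, not_forall, not_or] at ha
      obtain ⟨c, e, rfl, hc, he⟩ := ha h0
      have h1 := degE_pos_of_ne_zero hc
      have h2 := degE_pos_of_ne_zero he
      rw [AddSubmonoid.coe_add, degE_add] at hn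
      obtain ⟨z, hz⟩ := ih _ (by omega) c rfl
      obtain ⟨w, hw⟩ := ih _ (by omega) e rfl
      exact ⟨z + w, by rw [fac_add, hz, hw]⟩

lemma exists_eq_add_of_ne_zero {S : Type*} [AddCommMonoid S] {z : FreeExp S} (h : z ≠ 0) :
    ∃ (a : Atoms S) (z' : FreeExp S), z = Finsupp.single a 1 + z' := by
  obtain ⟨a, ha⟩ := Finsupp.ne_iff.mp h
  have : Finsupp.single a 1 ≤ z := by
    simpa [Nat.one_le_iff_ne_zero] using ha
  obtain ⟨z', hz⟩ := exists_add_of_le this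
  exact ⟨a, z', hz⟩

lemma exists_atom_le (b : BlockS G₀) (h : b ≠ 0) :
    ∃ a : Atoms (BlockS G₀), ((a : BlockS G₀) : G₀ →₀ ℕ) ≤ b := by
  obtain ⟨z, rfl⟩ := exists_fac b
  have hz : z ≠ 0 := by
    rintro rfl; exact h (by simp [fac])
  obtain ⟨a, z', rfl⟩ := exists_eq_add_of_ne_zero hz
  refine ⟨a, ?_⟩
  rw [fac_add, fac_single, AddSubmonoid.coe_add]
  exact le_self_add

/-- Lengths of sequences without product-one subsequence are bounded: each `x` occurs fewer than
`orderOf x` times. -/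
lemma bddAbove_littleDav [Finite G] : BddAbove {k | ∃ α : G₀ →₀ ℕ, degE α = k ∧
    ∀ γ : ↥(BlockS G₀), IsAtm γ → ∃ x : G₀, α x < (γ : G₀ →₀ ℕ) x} := by
  have := Fintype.ofFinite G₀
  refine ⟨∑ x : G₀, orderOf (x : G), ?_⟩
  rintro k ⟨α, rfl, hα⟩
  rw [degE, Finsupp.sum_fintype _ _ (fun _ => rfl)]
  refine Finset.sum_le_sum fun x _ => ?_
  by_contra! hx
  have hb : Finsupp.single x (orderOf (x : G)) ∈ BlockS G₀ := by
    change ((Finsupp.single x (orderOf (x : G))).prod fun x n => (x : G) ^ n) = 1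
    exact (Finsupp.prod_single_index (h := fun (x : G₀) n => (x : G) ^ n) (pow_zero _)).trans
      (pow_orderOf_eq_one _)
  obtain ⟨a, ha⟩ := exists_atom_le ⟨_, hb⟩ (by
    intro h
    have h' : Finsupp.single x (orderOf (x : G)) = 0 := congrArg Subtype.val h
    exact (orderOf_pos (x : G)).ne' (Finsupp.single_eq_zero.mp h'))
  have hle : Finsupp.single x (orderOf (x : G)) ≤ α := by simpa using hx.le
  obtain ⟨y, hy⟩ := hα a a.2
  exact absurd ((ha.trans hle) y) (by simpa using hy)

lemma exists_atom_le_of_littleDav_lt [Finite G] {α : G₀ →₀ ℕ} (h : littleDav G₀ < degE α) :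
    ∃ a : Atoms (BlockS G₀), ((a : BlockS G₀) : G₀ →₀ ℕ) ≤ α := by
  by_contra! hα
  refine absurd (le_csSup bddAbove_littleDav ⟨α, rfl, fun γ hγ => ?_⟩) (not_le.mpr h)
  by_contra! hx
  exact hα ⟨γ, hγ⟩ hx

/-- An atom has length at most `d(G₀) + 1`, since removing one term leaves a sequence not
divisible by any atom. -/
lemma degE_atom_le [Finite G] (a : Atoms (BlockS G₀)) :
    degE ((a : BlockS G₀) : G₀ →₀ ℕ) ≤ littleDav G₀ + 1 := by
  by_contra! h
  have h0 : (0 : G₀ →₀ ℕ) ≠ ((a : BlockS G₀) : G₀ →₀ ℕ) := fun h0 => a.2.1 (Subtype.ext h0.symm)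
  obtain ⟨c, x, hc, -⟩ := exists_le_and_add_single (zero_le) h0
  have hd := congrArg degE hc
  rw [degE_add, degE_single] at hd
  obtain ⟨e, he⟩ := exists_atom_le_of_littleDav_lt (α := c) (by omega)
  obtain ⟨r, hr, har⟩ := exists_block_add (e : BlockS G₀).2 (a : BlockS G₀).2
    (he.trans (hc ▸ le_self_add))
  rcases a.2.2 e ⟨r, hr⟩ (Subtype.ext har) with h | h
  · exact e.2.1 h
  · have : r = 0 := congrArg Subtype.val h
    have h1 := degE_mono he
    rw [har, this, add_zero] at hd
    omega

/-! ### Syzygies of the atoms as monomials -/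

/-- Two atoms dividing `b` are close if their least common multiple has length at most
`d(G₀) + 2`. -/
def Close (b : G₀ →₀ ℕ) (a a' : Atoms (BlockS G₀)) : Prop :=
  ((a : BlockS G₀) : G₀ →₀ ℕ) ≤ b ∧ ((a' : BlockS G₀) : G₀ →₀ ℕ) ≤ b ∧
    degE (((a : BlockS G₀) : G₀ →₀ ℕ) ⊔ ((a' : BlockS G₀) : G₀ →₀ ℕ)) ≤ littleDav G₀ + 2

lemma Close.mono {b c : G₀ →₀ ℕ} (h : b ≤ c) {a a' : Atoms (BlockS G₀)}
    (hp : ReflTransGen (Close b) a a') : ReflTransGen (Close c) a a' :=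
by
  induction hp with
  | refl => exact .refl
  | tail _ hc ih => exact ih.tail ⟨hc.1.trans h, hc.2.1.trans h, hc.2.2⟩

/-- Syzygies of the monomial ideal generated by the atoms are generated in degree at most
`d(G₀) + 2`. -/
lemma path_le [Finite G] (b : G₀ →₀ ℕ) (a a' : Atoms (BlockS G₀))
    (ha : ((a : BlockS G₀) : G₀ →₀ ℕ) ≤ b) (ha' : ((a' : BlockS G₀) : G₀ →₀ ℕ) ≤ b) :
    ReflTransGen (Close b) a a' := by
  induction hn : degE b using Nat.strong_induction_on generalizing b a a' with
  | _ n ih =>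
    by_cases hb : degE b ≤ littleDav G₀ + 2
    · exact ReflTransGen.single ⟨ha, ha', (degE_mono (sup_le ha ha')).trans hb⟩
    have hne : ∀ e : Atoms (BlockS G₀), ((e : BlockS G₀) : G₀ →₀ ℕ) ≠ b := by
      rintro e rfl
      have := degE_atom_le e
      omega
    obtain ⟨c, x, hc, hac⟩ := exists_le_and_add_single ha (hne a)
    obtain ⟨c', y, hc', hac'⟩ := exists_le_and_add_single ha' (hne a')
    have hd := congrArg degE hc
    have hd' := congrArg degE hc'
    rw [degE_add, degE_single] at hd hd'
    have hcb : c ≤ b := hc ▸ le_self_add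
    have hcb' : c' ≤ b := hc' ▸ le_self_add
    by_cases hxy : x = y
    · subst hxy
      have : c = c' := add_right_cancel (hc.symm.trans hc')
      subst this
      exact Close.mono hcb (ih _ (by omega) c a a' hac hac' rfl)
    · -- `y` still occurs in `c = b - x`, so that `f = b - x - y` divides both `c` and `c'`.
      have hyc : Finsupp.single y 1 ≤ c := by
        have := DFunLike.congr_fun (hc.symm.trans hc') y
        rw [Finsupp.add_apply, Finsupp.add_apply, Finsupp.single_eq_same,
          Finsupp.single_eq_of_ne (Ne.symm hxy)] at this
        simp only [Finsupp.single_le_iff]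
        omega
      obtain ⟨f, rfl⟩ := exists_add_of_le hyc
      have hfc' : c' = Finsupp.single x 1 + f := by
        apply add_right_cancel (b := Finsupp.single y 1)
        rw [← hc', hc]; abel
      rw [degE_add, degE_single] at hd
      obtain ⟨e, he⟩ := exists_atom_le_of_littleDav_lt (α := f) (by omega)
      refine (Close.mono hcb (ih _ ?_ _ a e hac (he.trans le_add_self) rfl)).trans
        (Close.mono hcb' (ih _ (by omega) c' e a' (he.trans (hfc' ▸ le_add_self)) hac' rfl))
      rw [degE_add, degE_single]; omega

/-! ### Linking factorizations -/

lemma mul_degE_le {m : ℕ} (hm : ∀ a : Atoms (BlockS G₀), m ≤ degE ((a : BlockS G₀) : G₀ →₀ ℕ))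
    (z : FreeExp (BlockS G₀)) : degE z * m ≤ degE ((fac z : BlockS G₀) : G₀ →₀ ℕ) := by
  induction hn : degE z generalizing z with
  | zero => simp
  | succ n ih =>
    obtain ⟨a, z', rfl⟩ := exists_eq_add_of_ne_zero (z := z) (by rintro rfl; simp [degE] at hn)
    rw [degE_add, degE_single] at hn
    have := ih z' (by omega)
    have := hm a
    rw [fac_add, fac_single, AddSubmonoid.coe_add, degE_add, Nat.add_mul]
    omega

/-- Any two factorizations of the same block are linked by steps of distance at most
`(2 * d(G₀) + 2) / m`, whenever every atom has length at least `m > 0`. -/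
lemma connected [Finite G] {m : ℕ} (hm0 : 0 < m)
    (hm : ∀ a : Atoms (BlockS G₀), m ≤ degE ((a : BlockS G₀) : G₀ →₀ ℕ))
    (z z' : FreeExp (BlockS G₀)) (hz : fac z = fac z') :
    ReflTransGen (Step ((2 * littleDav G₀ + 2) / m)) z z' := by
  induction hn : degE ((fac z : BlockS G₀) : G₀ →₀ ℕ) using Nat.strong_induction_on
    generalizing z z' with
  | _ n ih =>
    by_cases hb : degE ((fac z : BlockS G₀) : G₀ →₀ ℕ) ≤ 2 * littleDav G₀ + 2
    · refine ReflTransGen.single ⟨hz, max_le ?_ ?_⟩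
      · rw [Nat.le_div_iff_mul_le hm0]
        exact (Nat.mul_le_mul_right _ (degE_mono tsub_le_self)).trans ((mul_degE_le hm z).trans hb)
      · rw [Nat.le_div_iff_mul_le hm0]
        exact (Nat.mul_le_mul_right _ (degE_mono tsub_le_self)).trans
          ((mul_degE_le hm z').trans (hz ▸ hb))
    obtain ⟨b, hbz⟩ : ∃ b, b = fac z := ⟨_, rfl⟩
    rw [← hbz] at hb hn hz
    have hne : ∀ w : FreeExp (BlockS G₀), fac w = b → w ≠ 0 := by
      rintro w hw rfl
      apply hb
      rw [← hw]
      simp [fac, degE]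
    -- Two factorizations of `b` sharing an atom are linked.
    have share : ∀ (a : Atoms (BlockS G₀)) (u v : FreeExp (BlockS G₀)),
        fac (Finsupp.single a 1 + u) = b → fac (Finsupp.single a 1 + v) = b →
        ReflTransGen (Step ((2 * littleDav G₀ + 2) / m)) (Finsupp.single a 1 + u)
          (Finsupp.single a 1 + v) := by
      intro a u v hu hv
      rw [fac_add, fac_single] at hu hv
      have hd := congrArg (fun s : BlockS G₀ => degE (s : G₀ →₀ ℕ)) hu
      simp only [AddSubmonoid.coe_add, degE_add] at hd
      have hmul := hm a
      exact Step.add_left _ (ih _ (by omega) u v (add_left_cancel (hu.trans hv.symm)) rfl)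
    -- If `a + e` divides `b`, there is a factorization of `b` containing both `a` and `e`.
    have ext2 : ∀ a e : Atoms (BlockS G₀),
        ((a : BlockS G₀) : G₀ →₀ ℕ) + ((e : BlockS G₀) : G₀ →₀ ℕ) ≤ b →
        ∃ f : FreeExp (BlockS G₀), fac (Finsupp.single a 1 + (Finsupp.single e 1 + f)) = b := by
      intro a e h
      obtain ⟨r, hr, hbr⟩ := exists_block_add
        ((BlockS G₀).add_mem (a : BlockS G₀).2 (e : BlockS G₀).2) b.2 h
      obtain ⟨f, hf⟩ := exists_fac ⟨r, hr⟩
      refine ⟨f, Subtype.ext ?_⟩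
      rw [fac_add, fac_add, fac_single, fac_single, hf, hbr]
      simp [add_assoc]
    have le_of : ∀ (a : Atoms (BlockS G₀)) (u : FreeExp (BlockS G₀)),
        fac (Finsupp.single a 1 + u) = b → ((a : BlockS G₀) : G₀ →₀ ℕ) ≤ b := by
      intro a u hu
      rw [← hu, fac_add, fac_single, AddSubmonoid.coe_add]
      exact le_self_add
    obtain ⟨a, u, rfl⟩ := exists_eq_add_of_ne_zero (hne z hbz.symm)
    obtain ⟨a', u', rfl⟩ := exists_eq_add_of_ne_zero (hne z' hz.symm)
    have hpath := path_le (b : G₀ →₀ ℕ) a a' (le_of _ _ hbz.symm) (le_of _ _ hz.symm)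
    have key : ∀ v, fac (Finsupp.single a' 1 + v) = b →
        ReflTransGen (Step ((2 * littleDav G₀ + 2) / m)) (Finsupp.single a 1 + u)
          (Finsupp.single a' 1 + v) := by
      clear hz
      induction hpath with
      | refl => exact fun v hv => share a u v hbz.symm hv
      | @tail c c' _ hcc' ihc =>
        intro v hv
        obtain ⟨hc, hc', hlcm⟩ := hcc'
        obtain ⟨r, hr⟩ := exists_add_of_le (sup_le hc hc')
        have hd := congrArg degE hr
        rw [degE_add] at hd
        obtain ⟨e, he⟩ := exists_atom_le_of_littleDav_lt (α := r) (by omega)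
        obtain ⟨f, hf⟩ := ext2 c e (by rw [hr]; exact add_le_add le_sup_left he)
        obtain ⟨f', hf'⟩ := ext2 c' e (by rw [hr]; exact add_le_add le_sup_right he)
        have h1 := share e (Finsupp.single c 1 + f) (Finsupp.single c' 1 + f')
          (by rw [add_left_comm]; exact hf) (by rw [add_left_comm]; exact hf')
        rw [add_left_comm, add_left_comm _ (Finsupp.single c' 1)] at h1
        exact ((ihc _ hf).trans h1).trans (share c' _ _ hf' hv)
    exact key u' hz.symm

end Block

end DavenportBound

/-- Corollary 6.4: for a subset `G₀` of a finite abelian group `G` such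
that `ℬ(G₀)` has at least one atom,
`c(ℬ(G₀)) ≤ (2·d(G₀) + 2) / min{|α| : α ∈ 𝒜(ℬ(G₀))}`. -/
theorem catDeg_block_davenport_bound (G : Type) [CommGroup G] [Finite G] (G₀ : Set G)
    (hne : (Atoms ↥(BlockS G₀)).Nonempty) :
    catDeg ↥(BlockS G₀) ≤ (2 * littleDav G₀ + 2) /
      sInf {k | ∃ a ∈ Atoms ↥(BlockS G₀), degE ((a : ↥(BlockS G₀)) : ↥G₀ →₀ ℕ) = k} := by
  set A := {k | ∃ a ∈ Atoms ↥(BlockS G₀), degE ((a : ↥(BlockS G₀)) : ↥G₀ →₀ ℕ) = k} with hA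
  have hAne : A.Nonempty := hne.imp' _ fun a ha => ⟨a, ha, rfl⟩
  have hpos : 0 < sInf A := by
    obtain ⟨a, ha, h⟩ := Nat.sInf_mem hAne
    exact h ▸ DavenportBound.degE_pos_of_ne_zero ha.1
  exact Nat.sInf_le fun α γ h => DavenportBound.chainConn_of_reflTransGen
    (DavenportBound.connected hpos (fun a => Nat.sInf_le ⟨a, a.2, rfl⟩) α γ h)
end

section
/- For any finite abelian group G, the catenary degree of the block monoid of G satisfies c(ℬ(G)) ≤ D(G). -/
/-! ### Degrees and factorizations -/

lemma degE_eq_degree {σ : Type*} (α : σ →₀ ℕ) : degE α = α.degree := rfl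

lemma degE_add {σ : Type*} (α β : σ →₀ ℕ) : degE (α + β) = degE α + degE β := by
  simp [degE_eq_degree]

lemma degE_mono {σ : Type*} {α β : σ →₀ ℕ} (h : α ≤ β) : degE α ≤ degE β := by
  obtain ⟨δ, rfl⟩ := exists_add_of_le h
  rw [degE_add]; omega

lemma degE_pos {σ : Type*} {α : σ →₀ ℕ} (h : α ≠ 0) : 0 < degE α := by
  rw [Nat.pos_iff_ne_zero, degE_eq_degree]
  exact mt (Finsupp.degree_eq_zero_iff α).1 h

lemma exists_single_add {σ : Type*} {α : σ →₀ ℕ} (h : α ≠ 0) :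
    ∃ a β, α = Finsupp.single a 1 + β := by
  obtain ⟨a, ha⟩ := Finsupp.ne_iff.1 h
  refine ⟨a, α - Finsupp.single a 1, (add_tsub_cancel_of_le ?_).symm⟩
  rw [Finsupp.single_le_iff]
  exact Nat.one_le_iff_ne_zero.2 ha

lemma fac_zero {S : Type*} [AddCommMonoid S] : fac (0 : FreeExp S) = 0 := Finsupp.sum_zero_index

lemma fac_single {S : Type*} [AddCommMonoid S] (a : ↥(Atoms S)) :
    fac (Finsupp.single a 1) = (a : S) := by
  simp [fac]

/-! ### Chains as a reflexive transitive closure -/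

/-- Two factorizations of the same element at distance at most `d`: one link of a `d`-chain. -/
def ChainStep {S : Type*} [AddCommMonoid S] (d : ℕ) (α γ : FreeExp S) : Prop :=
  fac α = fac γ ∧ dDist α γ ≤ d

lemma chainConn_of_reflTransGen {S : Type*} [AddCommMonoid S] {d : ℕ} {α γ : FreeExp S}
    (h : Relation.ReflTransGen (ChainStep d) α γ) : ChainConn d α γ := by
  induction h using Relation.ReflTransGen.head_induction_on with
  | refl => exact ⟨0, fun _ => γ, rfl, rfl, by simp⟩
  | head hab hbc ih =>
    rename_i a b
    obtain ⟨k, c, h0, hk, hc⟩ := ih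
    refine ⟨k + 1, fun j => Nat.casesOn j a c, rfl, hk, ?_⟩
    rintro (_ | j) hj
    · show fac a = fac (c 0) ∧ dDist a (c 0) ≤ d
      rw [h0]; exact hab
    · exact hc j (by omega)

lemma gcdE_comm {σ : Type*} (α β : σ →₀ ℕ) : gcdE α β = gcdE β α := by
  ext x; simp [gcdE, min_comm]

lemma ChainStep.symm {S : Type*} [AddCommMonoid S] {d : ℕ} :
    Std.Symm (ChainStep (S := S) d) := by
  refine ⟨fun α γ h => ⟨h.1.symm, ?_⟩⟩
  have := h.2
  rwa [dDist, gcdE_comm, max_comm]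

lemma dDist_add_right {σ : Type*} (α β δ : σ →₀ ℕ) : dDist (α + δ) (β + δ) = dDist α β := by
  have h1 : (α + δ) - gcdE (α + δ) (β + δ) = α - gcdE α β := by
    ext x; simp [gcdE]; omega
  have h2 : (β + δ) - gcdE (α + δ) (β + δ) = β - gcdE α β := by
    ext x; simp [gcdE]; omega
  rw [dDist, dDist, h1, h2]

lemma ChainStep.add_right {S : Type*} [AddCommMonoid S] {d : ℕ} {α γ : FreeExp S}
    (δ : FreeExp S) (h : ChainStep d α γ) : ChainStep d (α + δ) (γ + δ) :=
  ⟨by rw [fac_add, fac_add, h.1], by rw [dDist_add_right]; exact h.2⟩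

lemma chain_add_right {S : Type*} [AddCommMonoid S] {d : ℕ} {α γ : FreeExp S} (δ : FreeExp S)
    (h : Relation.ReflTransGen (ChainStep d) α γ) :
    Relation.ReflTransGen (ChainStep d) (α + δ) (γ + δ) :=
  h.lift (· + δ) fun _ _ => ChainStep.add_right δ

lemma chainStep_of_degE_le {S : Type*} [AddCommMonoid S] {d : ℕ} {α γ : FreeExp S}
    (h : fac α = fac γ) (hα : degE α ≤ d) (hγ : degE γ ≤ d) : ChainStep d α γ :=
  ⟨h, max_le ((degE_mono tsub_le_self).trans hα) ((degE_mono tsub_le_self).trans hγ)⟩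

/-! ### Divisibility in the block monoid -/

section Block

variable {G : Type*} [CommGroup G]

/-- Since `G` is a group, the pointwise order on `ℬ(G₀)` is divisibility. -/
lemma block_exists_add {G₀ : Set G} {b c : ↥(BlockS G₀)}
    (h : (b : G₀ →₀ ℕ) ≤ (c : G₀ →₀ ℕ)) : ∃ e : ↥(BlockS G₀), c = b + e := by
  obtain ⟨⟨b, hb⟩, ⟨c, hc⟩⟩ := b, c
  obtain ⟨e, rfl⟩ := exists_add_of_le (show b ≤ c from h)
  refine ⟨⟨e, ?_⟩, rfl⟩
  change b.prod (fun x n => (x : G) ^ n) = 1 at hb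
  change (b + e).prod (fun x n => (x : G) ^ n) = 1 at hc
  rw [Finsupp.prod_add_index' (fun x => pow_zero _) (fun x m n => pow_add _ m n), hb,
    one_mul] at hc
  exact hc

lemma block_degE_pos {G₀ : Set G} {s : ↥(BlockS G₀)} (h : s ≠ 0) :
    0 < degE (s : G₀ →₀ ℕ) :=
  degE_pos fun h0 => h (Subtype.ext h0)

lemma block_degE_add {G₀ : Set G} (s t : ↥(BlockS G₀)) :
    degE ((s + t : ↥(BlockS G₀)) : G₀ →₀ ℕ)
      = degE (s : G₀ →₀ ℕ) + degE (t : G₀ →₀ ℕ) :=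
  degE_add _ _

/-- The block monoid is atomic. -/
lemma block_exists_fac {G₀ : Set G} (s : ↥(BlockS G₀)) :
    ∃ α : FreeExp ↥(BlockS G₀), fac α = s := by
  induction hn : degE (s : G₀ →₀ ℕ) using Nat.strong_induction_on generalizing s with
  | _ n ih =>
    by_cases h0 : s = 0
    · exact ⟨0, by rw [h0, fac_zero]⟩
    by_cases ha : IsAtm s
    · exact ⟨Finsupp.single ⟨s, ha⟩ 1, fac_single _⟩
    simp only [IsAtm, not_and, not_forall, not_or] at ha
    obtain ⟨b, c, rfl, hb, hc⟩ := ha h0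
    have hb' := block_degE_pos hb
    have hc' := block_degE_pos hc
    rw [block_degE_add] at hn
    obtain ⟨β, hβ⟩ := ih _ (by omega) b rfl
    obtain ⟨γ, hγ⟩ := ih _ (by omega) c rfl
    exact ⟨β + γ, by rw [fac_add, hβ, hγ]⟩

/-- A function `u` dominated by a product of atoms is dominated by the product of at most `|u|`
of them. -/
lemma exists_small_cover {G₀ : Set G} (γ : FreeExp ↥(BlockS G₀)) (u : G₀ →₀ ℕ)
    (hu : u ≤ ((fac γ : ↥(BlockS G₀)) : G₀ →₀ ℕ)) :
    ∃ γ' γ'' : FreeExp ↥(BlockS G₀), γ = γ' + γ'' ∧ degE γ' ≤ degE u ∧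
      u ≤ ((fac γ' : ↥(BlockS G₀)) : G₀ →₀ ℕ) := by
  induction hn : degE γ generalizing γ u with
  | zero =>
    have h0 : γ = 0 := by
      by_contra h
      exact (degE_pos h).ne' hn
    exact ⟨γ, 0, (add_zero _).symm, by omega, hu⟩
  | succ n ih =>
    have h0 : γ ≠ 0 := by
      rintro rfl
      simp [degE_eq_degree] at hn
    obtain ⟨a, β, rfl⟩ := exists_single_add h0
    have hβ : degE β = n := by
      rw [degE_add] at hn
      simp [degE_eq_degree] at hn ⊢
      omega
    rw [fac_add, fac_single] at hu
    -- remove from `u` the part covered by `a`; the rest has to be covered by `β`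
    obtain ⟨β', β'', rfl, hdeg, hcov⟩ :=
      ih β (u - (a : ↥(BlockS G₀)).1) (tsub_le_iff_left.2 hu) hβ
    by_cases hua : u - (a : ↥(BlockS G₀)).1 = u
    · rw [hua] at hdeg hcov
      exact ⟨β', Finsupp.single a 1 + β'', by abel, hdeg, hcov⟩
    · refine ⟨Finsupp.single a 1 + β', β'', by abel, ?_, ?_⟩
      · obtain ⟨v, hv⟩ := exists_add_of_le (show u - (a : ↥(BlockS G₀)).1 ≤ u from tsub_le_self)
        have hv0 : v ≠ 0 := by
          rintro rfl
          exact hua (by rw [add_zero] at hv; exact hv.symm)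
        have h1 : degE u = degE (u - (a : ↥(BlockS G₀)).1) + degE v := by
          rw [← degE_add, ← hv]
        have h2 := degE_pos hv0
        have h3 : degE (Finsupp.single a 1) = 1 := by simp [degE_eq_degree]
        rw [degE_add, h3]
        omega
      · rw [fac_add, fac_single]
        exact tsub_le_iff_left.1 hcov

/-! ### The Davenport constant and the chains -/

lemma finite_atoms_block [Finite G] (G₀ : Set G) : (Atoms ↥(BlockS G₀)).Finite := by
  have hanti : IsAntichain (· ≤ ·) ((↑) '' Atoms ↥(BlockS G₀) : Set (G₀ →₀ ℕ)) := by
    rintro _ ⟨a, ha, rfl⟩ _ ⟨b, hb, rfl⟩ hne hle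
    obtain ⟨e, he⟩ := block_exists_add hle
    rcases hb.2 a e he with h | h
    · exact ha.1 h
    · exact hne (by rw [he, h, add_zero])
  have hfin := WellQuasiOrderedLE.finite_of_isAntichain hanti
  exact hfin.of_finite_image Subtype.val_injective.injOn

lemma degE_le_davenport [Finite G] {G₀ : Set G} {u : ↥(BlockS G₀)} (hu : IsAtm u) :
    degE (u : G₀ →₀ ℕ) ≤ DavenportC G₀ := by
  refine le_csSup ?_ ⟨u, hu, rfl⟩
  exact ((finite_atoms_block G₀).image fun γ => degE γ.1).bddAbove

/-- The chain between `α` and `γ` when `γ` has more than `D(G₀)` factors, given chains between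
all factorizations of strictly shorter elements. -/
lemma chain_of_davenport_lt [Finite G] {G₀ : Set G} {α γ : FreeExp ↥(BlockS G₀)}
    (h : fac α = fac γ) (hγ : DavenportC G₀ < degE γ)
    (ih : ∀ β δ : FreeExp ↥(BlockS G₀), fac β = fac δ →
      degE (fac β : ↥(BlockS G₀)).1 < degE (fac α : ↥(BlockS G₀)).1 →
      Relation.ReflTransGen (ChainStep (DavenportC G₀)) β δ) :
    Relation.ReflTransGen (ChainStep (DavenportC G₀)) α γ := by
  have hpos : ∀ β : FreeExp ↥(BlockS G₀), β ≠ 0 → 0 < degE (fac β : ↥(BlockS G₀)).1 := by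
    intro β hβ
    obtain ⟨a, β, rfl⟩ := exists_single_add hβ
    rw [fac_add, fac_single, block_degE_add]
    have := block_degE_pos a.2.1
    omega
  have hα0 : α ≠ 0 := by
    rintro rfl
    have hγ0 : γ ≠ 0 := by
      rintro rfl
      simp [degE_eq_degree] at hγ
    have := hpos γ hγ0
    rw [← h, fac_zero] at this
    simp [degE_eq_degree] at this
  obtain ⟨u, α, rfl⟩ := exists_single_add hα0
  have hu := degE_le_davenport u.2
  have hupos := block_degE_pos u.2.1
  obtain ⟨γ', γ'', rfl, hdeg, hcov⟩ := exists_small_cover γ u.1.1 (by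
    rw [← h, fac_add, fac_single]
    exact le_self_add)
  obtain ⟨w, hw⟩ := block_exists_add hcov
  obtain ⟨ω, rfl⟩ := block_exists_fac w
  -- `γ'` has at most `D` factors, so some factors of `γ` are left over
  have hγ'' : γ'' ≠ 0 := by
    rintro rfl
    rw [add_zero] at hγ
    omega
  have hpos'' := hpos γ'' hγ''
  have hω : fac γ' = fac (Finsupp.single u 1 + ω) := by rw [hw, fac_add, fac_single]
  have h1 : Relation.ReflTransGen (ChainStep (DavenportC G₀))
      (γ' + γ'') (Finsupp.single u 1 + ω + γ'') := by
    refine chain_add_right γ'' (ih _ _ hω ?_)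
    rw [h, fac_add, block_degE_add]
    omega
  have hα : fac α = fac (ω + γ'') := by
    rw [fac_add γ', hω, fac_add, fac_add, fac_single, add_assoc] at h
    rw [fac_add]
    refine Subtype.ext (add_left_cancel (a := u.1.1) ?_)
    exact congrArg Subtype.val h
  have h2 : Relation.ReflTransGen (ChainStep (DavenportC G₀))
      (α + Finsupp.single u 1) (ω + γ'' + Finsupp.single u 1) := by
    refine chain_add_right _ (ih _ _ hα ?_)
    rw [fac_add, fac_single, block_degE_add]
    omega
  have e1 : ω + γ'' + Finsupp.single u 1 = Finsupp.single u 1 + ω + γ'' := by abel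
  rw [add_comm α, e1] at h2
  have := ChainStep.symm (S := ↥(BlockS G₀)) (d := DavenportC G₀)
  exact h2.trans (symm_of _ h1)

lemma chain_block [Finite G] {G₀ : Set G} (α γ : FreeExp ↥(BlockS G₀)) (h : fac α = fac γ) :
    Relation.ReflTransGen (ChainStep (DavenportC G₀)) α γ := by
  induction hn : degE (fac α : ↥(BlockS G₀)).1 using Nat.strong_induction_on
    generalizing α γ with
  | _ n ih =>
    subst hn
    by_cases hγ : DavenportC G₀ < degE γ
    · exact chain_of_davenport_lt h hγ fun β δ hβ hlt => ih _ hlt β δ hβ rfl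
    by_cases hα : DavenportC G₀ < degE α
    · have := ChainStep.symm (S := ↥(BlockS G₀)) (d := DavenportC G₀)
      refine symm_of _ (chain_of_davenport_lt h.symm hα fun β δ hβ hlt => ih _ ?_ β δ hβ rfl)
      rwa [h]
    · exact .single (chainStep_of_degE_le h (not_lt.1 hα) (not_lt.1 hγ))

end Block

/-- Corollary 6.5: for any finite abelian group `G`,
`c(ℬ(G)) ≤ D(G)`. -/
theorem catDeg_block_le_davenport (G : Type) [CommGroup G] [Finite G] :
    catDeg ↥(BlockS (Set.univ : Set G)) ≤ DavenportC (Set.univ : Set G) :=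
  Nat.sInf_le fun α γ h => chainConn_of_reflTransGen (chain_block α γ h)
end
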